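/- Let ω and ω' be alternating bilinear forms on V₂ that are both normalized and multiplicative, with components (C₄₁, C₃₂) and (C₄₁', C₃₂') respectively. Then the following are equivalent: (i) there exists an alternating bilinear form α on V₁ such that α((0,m),(0,m')) = 0 for all m, m' ∈ W₀, α((0,m),(∂₂ a, 0)) = 0 for all m ∈ W₀ and a ∈ W₂, α((0,∂₁ x),(x',0)) + α((0,∂₁ x'),(x,0)) = 0 for all x, x' ∈ W₁, and ω' − ω = δα, where δα(u,v) := α(g₀u, g₀v) − α(g₁u, g₁v) + α(g₂u, g₂v); (ii) C₄₁' = C₄₁ and the symmetric parts agree: C₃₂'(x,x') + C₃₂'(x',x) = C₃₂(x,x') + C₃₂(x',x) for all x, x' ∈ W₁. -/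

import Mathlib

/-!
The difference of two alternating, normalized, multiplicative forms is again one, and such a form
is determined by its components `C₄₁` and `C₃₂`: normalization leaves only `C₃₂` among the blocks
not involving `W₂`, and multiplicativity, evaluated on vectors with a single nonzero coordinate,
gives `C₃₁(y, a) = -C₃₂(y, ∂₂a)`, `C₂₁(x, a) = -C₃₁(x, a) - C₄₁(∂₁x, a)` and
`C₁₁(a, b) = C₃₁(∂₂a, b)`.

If `C₄₁` vanishes and `C₃₂` is alternating, then pulling `-C₃₂` back to `V₁` gives a form `α` such
that `δα` has the same two components, whence `δα` is the form itself. Conversely `C₄₁(m, a)` of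
`δα` is `α((0,m),(∂₂a,0))`, and the symmetric part of its `C₃₂` is
`α((0,∂₁x),(x',0)) + α((0,∂₁x'),(x,0))`.
-/

section MultiplicativeForms

variable {R W₀ W₁ W₂ N : Type*} [CommRing R]
  [AddCommGroup W₀] [Module R W₀] [AddCommGroup W₁] [Module R W₁]
  [AddCommGroup W₂] [Module R W₂] [AddCommGroup N] [Module R N]

/-- The component `C₄₁` of a form on `V₂`, pairing its fourth summand `W₀` with its first
summand `W₂`. -/
def component₄₁ (ω : (W₂ × W₁ × W₁ × W₀) →ₗ[R] (W₂ × W₁ × W₁ × W₀) →ₗ[R] N) :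
    W₀ →ₗ[R] W₂ →ₗ[R] N :=
  ω.compl₁₂ (.inr R W₂ _ ∘ₗ .inr R W₁ _ ∘ₗ .inr R W₁ W₀) (.inl R W₂ _)

/-- The component `C₃₂` of a form on `V₂`, pairing its third summand with its second, both equal
to `W₁`. -/
def component₃₂ (ω : (W₂ × W₁ × W₁ × W₀) →ₗ[R] (W₂ × W₁ × W₁ × W₀) →ₗ[R] N) :
    W₁ →ₗ[R] W₁ →ₗ[R] N :=
  ω.compl₁₂ (.inr R W₂ _ ∘ₗ .inr R W₁ _ ∘ₗ .inl R W₁ W₀) (.inr R W₂ _ ∘ₗ .inl R W₁ _)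

theorem component₄₁_apply (ω : (W₂ × W₁ × W₁ × W₀) →ₗ[R] (W₂ × W₁ × W₁ × W₀) →ₗ[R] N)
    (m : W₀) (a : W₂) :
    component₄₁ ω m a = ω (0, 0, 0, m) (a, 0, 0, 0) :=
  rfl

theorem component₃₂_apply (ω : (W₂ × W₁ × W₁ × W₀) →ₗ[R] (W₂ × W₁ × W₁ × W₀) →ₗ[R] N)
    (x x' : W₁) :
    component₃₂ ω x x' = ω (0, 0, x, 0) (0, x', 0, 0) :=
  rfl

/-- The face map `g₀ : V₂ → V₁`. -/
def face₀ : (W₂ × W₁ × W₁ × W₀) →ₗ[R] (W₁ × W₀) where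
  toFun u := (u.2.1, u.2.2.2)
  map_add' _ _ := rfl
  map_smul' _ _ := rfl

/-- The face map `g₁ : V₂ → V₁`. -/
def face₁ : (W₂ × W₁ × W₁ × W₀) →ₗ[R] (W₁ × W₀) where
  toFun u := (u.2.2.1, u.2.2.2)
  map_add' _ _ := rfl
  map_smul' _ _ := rfl

/-- The face map `g₂ : V₂ → V₁`. -/
def face₂ (d₂ : W₂ →ₗ[R] W₁) (d₁ : W₁ →ₗ[R] W₀) :
    (W₂ × W₁ × W₁ × W₀) →ₗ[R] (W₁ × W₀) where
  toFun u := (d₂ u.1 + u.2.2.1 - u.2.1, u.2.2.2 - d₁ u.2.1)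
  map_add' u v := by
    ext <;> simp only [Prod.fst_add, Prod.snd_add, map_add] <;> abel
  map_smul' r u := by
    simp [smul_sub, smul_add]

/-- The simplicial coboundary `δα = g₀*α - g₁*α + g₂*α` of a form `α` on `V₁`. -/
def coboundary (d₂ : W₂ →ₗ[R] W₁) (d₁ : W₁ →ₗ[R] W₀)
    (α : (W₁ × W₀) →ₗ[R] (W₁ × W₀) →ₗ[R] N) :
    (W₂ × W₁ × W₁ × W₀) →ₗ[R] (W₂ × W₁ × W₁ × W₀) →ₗ[R] N :=
  α.compl₁₂ face₀ face₀ - α.compl₁₂ face₁ face₁ + α.compl₁₂ (face₂ d₂ d₁) (face₂ d₂ d₁)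

/-- Alternating, normalized, multiplicative forms on `V₂`. Normalization and multiplicativity are
written out in coordinates: `(0, x, x, m)` and `(0, 0, x, m)` are the degeneracies `σ₀(x, m)` and
`σ₁(x, m)`, and the four terms of `multiplicative` are the pullbacks along `f₀, f₁, f₂, f₃`. -/
structure IsMultiplicativeTwoForm (d₂ : W₂ →ₗ[R] W₁) (d₁ : W₁ →ₗ[R] W₀)
    (ω : (W₂ × W₁ × W₁ × W₀) →ₗ[R] (W₂ × W₁ × W₁ × W₀) →ₗ[R] N) : Prop where
  alt : ω.IsAlt
  normalized : ∀ (x x' : W₁) (m m' : W₀),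
    ω (0, x, x, m) (0, x', x', m') = 0 ∧ ω (0, 0, x, m) (0, 0, x', m') = 0
  multiplicative : ∀ (a b c : W₂) (x y z : W₁) (m : W₀)
      (a' b' c' : W₂) (x' y' z' : W₁) (m' : W₀),
    ω (a, x, y, m) (a', x', y', m')
      - ω (b, x, z, m) (b', x', z', m')
      + ω (c, y, z, m) (c', y', z', m')
      - ω (c - b + a, d₂ a + y - x, d₂ b + z - x, m - d₁ x)
          (c' - b' + a', d₂ a' + y' - x', d₂ b' + z' - x', m' - d₁ x') = 0

variable {d₂ : W₂ →ₗ[R] W₁} {d₁ : W₁ →ₗ[R] W₀}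
  {ω ω' : (W₂ × W₁ × W₁ × W₀) →ₗ[R] (W₂ × W₁ × W₁ × W₀) →ₗ[R] N}

namespace IsMultiplicativeTwoForm

theorem sub (hω : IsMultiplicativeTwoForm d₂ d₁ ω) (hω' : IsMultiplicativeTwoForm d₂ d₁ ω') :
    IsMultiplicativeTwoForm d₂ d₁ (ω - ω') where
  alt u := by simp [hω.alt u, hω'.alt u]
  normalized x x' m m' := by simp [hω.normalized x x' m m', hω'.normalized x x' m m']
  multiplicative a b c x y z m a' b' c' x' y' z' m' := by
    simp only [LinearMap.sub_apply]
    linear_combination (norm := module)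
      hω.multiplicative a b c x y z m a' b' c' x' y' z' m'
        - hω'.multiplicative a b c x y z m a' b' c' x' y' z' m'

theorem block₃₁_eq (hω : IsMultiplicativeTwoForm d₂ d₁ ω) (y : W₁) (a : W₂) :
    ω (0, 0, y, 0) (a, 0, 0, 0) = -component₃₂ ω y (d₂ a) := by
  have hface : ω (0, 0, y, 0) (a, d₂ a, 0, 0) = 0 := by
    simpa [← Prod.zero_eq_mk] using hω.multiplicative 0 0 0 0 0 y 0 a 0 0 0 0 0 0
  have hsplit : ((a, d₂ a, 0, 0) : W₂ × W₁ × W₁ × W₀) = (a, 0, 0, 0) + (0, d₂ a, 0, 0) := by simp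
  rwa [hsplit, map_add, add_eq_zero_iff_eq_neg] at hface

theorem block₂₁_eq (hω : IsMultiplicativeTwoForm d₂ d₁ ω) (x : W₁) (a : W₂) :
    ω (0, x, 0, 0) (a, 0, 0, 0)
      = -ω (0, 0, x, 0) (a, 0, 0, 0) - component₄₁ ω (d₁ x) a := by
  have hface : ω (0, x, x, d₁ x) (a, 0, 0, 0) = 0 := by
    simpa [← Prod.zero_eq_mk] using hω.multiplicative 0 0 0 (-x) 0 0 0 0 0 a 0 0 0 0
  have hsplit : ((0, x, x, d₁ x) : W₂ × W₁ × W₁ × W₀)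
      = (0, x, 0, 0) + (0, 0, x, 0) + (0, 0, 0, d₁ x) := by simp
  rw [hsplit, map_add, map_add, LinearMap.add_apply, LinearMap.add_apply] at hface
  rw [component₄₁_apply]
  linear_combination (norm := module) hface

theorem block₁₁_eq (hω : IsMultiplicativeTwoForm d₂ d₁ ω) (a b : W₂) :
    ω (a, 0, 0, 0) (b, 0, 0, 0) = ω (0, 0, d₂ a, 0) (b, 0, 0, 0) := by
  have hface : ω (a, 0, -d₂ a, 0) (b, 0, 0, 0) = 0 := by
    simpa [← Prod.zero_eq_mk] using hω.multiplicative 0 (-a) 0 0 0 0 0 0 0 b 0 0 0 0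
  have hsplit : ((a, 0, -d₂ a, 0) : W₂ × W₁ × W₁ × W₀) = (a, 0, 0, 0) - (0, 0, d₂ a, 0) := by simp
  rwa [hsplit, map_sub, LinearMap.sub_apply, sub_eq_zero] at hface

theorem apply_inl_eq_zero (hω : IsMultiplicativeTwoForm d₂ d₁ ω)
    (h₄₁ : component₄₁ ω = 0) (h₃₂ : component₃₂ ω = 0) (u : W₂ × W₁ × W₁ × W₀) (b : W₂) :
    ω u (b, 0, 0, 0) = 0 := by
  obtain ⟨a, x, y, m⟩ := u
  have hsplit : ((a, x, y, m) : W₂ × W₁ × W₁ × W₀)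
      = (a, 0, 0, 0) + (0, x, 0, 0) + (0, 0, y, 0) + (0, 0, 0, m) := by simp
  rw [hsplit]
  simp only [map_add, LinearMap.add_apply, ← component₄₁_apply, hω.block₁₁_eq, hω.block₂₁_eq,
    hω.block₃₁_eq, h₄₁, h₃₂, LinearMap.zero_apply, neg_zero, sub_zero, add_zero]

theorem apply_inr_inr_eq_zero (hω : IsMultiplicativeTwoForm d₂ d₁ ω)
    (h₃₂ : component₃₂ ω = 0) (x y x' y' : W₁) (m m' : W₀) :
    ω (0, x, y, m) (0, x', y', m') = 0 := by
  have hcross (z x : W₁) (m : W₀) : ω (0, 0, z, 0) (0, x, x, m) = 0 := by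
    have hsplit : ((0, x, x, m) : W₂ × W₁ × W₁ × W₀) = (0, x, 0, 0) + (0, 0, x, m) := by simp
    rw [hsplit, map_add, (hω.normalized z x 0 m).2, ← component₃₂_apply, h₃₂,
      LinearMap.zero_apply, LinearMap.zero_apply, add_zero]
  have hsplit (x y : W₁) (m : W₀) : ((0, x, y, m) : W₂ × W₁ × W₁ × W₀)
      = (0, x, x, m) + (0, 0, y - x, 0) := by simp
  rw [hsplit x, hsplit x']
  simp only [map_add, LinearMap.add_apply, (hω.normalized _ _ _ _).1, (hω.normalized _ _ _ _).2,
    hcross, hω.alt.eq_iff.1 (hcross _ _ _), add_zero]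

theorem eq_zero (hω : IsMultiplicativeTwoForm d₂ d₁ ω)
    (h₄₁ : component₄₁ ω = 0) (h₃₂ : component₃₂ ω = 0) : ω = 0 := by
  refine LinearMap.ext₂ fun ⟨a, x, y, m⟩ ⟨a', x', y', m'⟩ ↦ ?_
  have hsplit (a : W₂) (x y : W₁) (m : W₀) :
      ((a, x, y, m) : W₂ × W₁ × W₁ × W₀) = (a, 0, 0, 0) + (0, x, y, m) := by simp
  have hW₂ := hω.apply_inl_eq_zero h₄₁ h₃₂
  rw [hsplit a, hsplit a']
  simp only [map_add, LinearMap.add_apply, hW₂, hω.alt.eq_iff.1 (hW₂ _ _),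
    hω.apply_inr_inr_eq_zero h₃₂, LinearMap.zero_apply, add_zero]

theorem ext_components (hω : IsMultiplicativeTwoForm d₂ d₁ ω)
    (hω' : IsMultiplicativeTwoForm d₂ d₁ ω') (h₄₁ : component₄₁ ω = component₄₁ ω')
    (h₃₂ : component₃₂ ω = component₃₂ ω') : ω = ω' :=
  sub_eq_zero.1 <| (hω.sub hω').eq_zero (sub_eq_zero.2 h₄₁) (sub_eq_zero.2 h₃₂)

end IsMultiplicativeTwoForm

theorem component₄₁_coboundary (α : (W₁ × W₀) →ₗ[R] (W₁ × W₀) →ₗ[R] N) (m : W₀) (a : W₂) :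
    component₄₁ (coboundary d₂ d₁ α) m a = α (0, m) (d₂ a, 0) := by
  simp [component₄₁_apply, coboundary, face₀, face₁, face₂, ← Prod.zero_eq_mk]

theorem component₃₂_coboundary (α : (W₁ × W₀) →ₗ[R] (W₁ × W₀) →ₗ[R] N) (x x' : W₁) :
    component₃₂ (coboundary d₂ d₁ α) x x' = -α (x, 0) (x', d₁ x') := by
  have hneg : ((-x', -d₁ x') : W₁ × W₀) = -(x', d₁ x') := rfl
  simp [component₃₂_apply, coboundary, face₀, face₁, face₂, ← Prod.zero_eq_mk, hneg,
    -Prod.neg_mk]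

theorem component₃₂_coboundary_add_swap {α : (W₁ × W₀) →ₗ[R] (W₁ × W₀) →ₗ[R] N}
    (hα : α.IsAlt) (x x' : W₁) :
    component₃₂ (coboundary d₂ d₁ α) x x' + component₃₂ (coboundary d₂ d₁ α) x' x
      = α (0, d₁ x) (x', 0) + α (0, d₁ x') (x, 0) := by
  have hsplit (x : W₁) : ((x, d₁ x) : W₁ × W₀) = (x, 0) + (0, d₁ x) := by simp
  rw [component₃₂_coboundary, component₃₂_coboundary, hsplit x, hsplit x', map_add, map_add,
    ← hα.neg (x, 0) (x', 0), ← hα.neg (x', 0) (0, d₁ x), ← hα.neg (x, 0) (0, d₁ x')]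
  abel

theorem coboundary_compl₁₂_fst_apply (A : W₁ →ₗ[R] W₁ →ₗ[R] N) (u v : W₂ × W₁ × W₁ × W₀) :
    coboundary d₂ d₁ (A.compl₁₂ (.fst R W₁ W₀) (.fst R W₁ W₀)) u v
      = A u.2.1 v.2.1 - A u.2.2.1 v.2.2.1
        + A (d₂ u.1 + u.2.2.1 - u.2.1) (d₂ v.1 + v.2.2.1 - v.2.1) :=
  rfl

theorem isMultiplicativeTwoForm_coboundary_compl₁₂_fst {A : W₁ →ₗ[R] W₁ →ₗ[R] N}
    (hA : A.IsAlt) :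
    IsMultiplicativeTwoForm d₂ d₁
      (coboundary d₂ d₁ (A.compl₁₂ (.fst R W₁ W₀) (.fst R W₁ W₀))) where
  alt u := by simp only [coboundary_compl₁₂_fst_apply, hA.self_eq_zero, sub_zero, add_zero]
  normalized x x' m m' := by simp [coboundary_compl₁₂_fst_apply]
  multiplicative a b c x y z m a' b' c' x' y' z' m' := by
    have hface (a b c : W₂) (x y z : W₁) :
        d₂ (c - b + a) + (d₂ b + z - x) - (d₂ a + y - x) = d₂ c + z - y := by
      rw [map_add, map_sub]
      abel
    simp only [coboundary_compl₁₂_fst_apply, hface]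
    abel

theorem IsMultiplicativeTwoForm.eq_coboundary (hω : IsMultiplicativeTwoForm d₂ d₁ ω)
    (h₄₁ : component₄₁ ω = 0) (h₃₂ : (component₃₂ ω).IsAlt) :
    ω = coboundary d₂ d₁ ((-component₃₂ ω).compl₁₂ (.fst R W₁ W₀) (.fst R W₁ W₀)) := by
  have hneg : (-component₃₂ ω).IsAlt := fun x ↦ by simp [h₃₂.self_eq_zero]
  refine hω.ext_components (isMultiplicativeTwoForm_coboundary_compl₁₂_fst hneg) ?_ ?_
  · refine LinearMap.ext₂ fun m a ↦ ?_
    simp [h₄₁, component₄₁_coboundary]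
  · refine LinearMap.ext₂ fun x x' ↦ ?_
    simp [component₃₂_coboundary]

theorem stmt_9_general (hN : IsSMulRegular N (2 : ℕ))
    (hω : IsMultiplicativeTwoForm d₂ d₁ ω) (hω' : IsMultiplicativeTwoForm d₂ d₁ ω') :
    (∃ α : (W₁ × W₀) →ₗ[R] (W₁ × W₀) →ₗ[R] N,
        α.IsAlt
        ∧ (∀ m m' : W₀, α (0, m) (0, m') = 0)
        ∧ (∀ (m : W₀) (a : W₂), α (0, m) (d₂ a, 0) = 0)
        ∧ (∀ x x' : W₁, α (0, d₁ x) (x', 0) + α (0, d₁ x') (x, 0) = 0)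
        ∧ ∀ u v : W₂ × W₁ × W₁ × W₀, ω' u v - ω u v = coboundary d₂ d₁ α u v)
    ↔ (∀ (m : W₀) (a : W₂), component₄₁ ω' m a = component₄₁ ω m a)
      ∧ ∀ x x' : W₁, component₃₂ ω' x x' + component₃₂ ω' x' x
          = component₃₂ ω x x' + component₃₂ ω x' x := by
  constructor
  · rintro ⟨α, hα, -, hα₄₁, hα₃₂, hδ⟩
    obtain rfl : ω' = ω + coboundary d₂ d₁ α :=
      LinearMap.ext₂ fun u v ↦ sub_eq_iff_eq_add'.1 (hδ u v)
    refine ⟨fun m a ↦ ?_, fun x x' ↦ ?_⟩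
    · exact add_eq_left.2 ((component₄₁_coboundary α m a).trans (hα₄₁ m a))
    · have hsymm := (component₃₂_coboundary_add_swap (d₂ := d₂) hα x x').trans (hα₃₂ x x')
      simp only [component₃₂_apply, LinearMap.add_apply] at hsymm ⊢
      linear_combination (norm := module) hsymm
  · rintro ⟨h₄₁, h₃₂⟩
    have halt : (component₃₂ (ω' - ω)).IsAlt := fun x ↦ hN.right_eq_zero_of_smul <| by
      have hdiag := h₃₂ x x
      simp only [component₃₂_apply, LinearMap.sub_apply] at hdiag ⊢
      linear_combination (norm := module) hdiag
    have hδ := (hω'.sub hω).eq_coboundary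
      (LinearMap.ext₂ fun m a ↦ sub_eq_zero.2 (h₄₁ m a)) halt
    refine ⟨_, fun v ↦ ?_, ?_, ?_, ?_, fun u v ↦ LinearMap.congr_fun₂ hδ u v⟩
    · simp [halt.self_eq_zero]
    all_goals intros; simp

end MultiplicativeForms

/-- for alternating, normalized, multiplicative bilinear forms `ω, ω'` on
`V₂ = W₂ × W₁ × W₁ × W₀`, the existence of an alternating bilinear form `α` on
`V₁ = W₁ × W₀` satisfying the stated conditions with `ω' − ω = δα` is equivalent to
`C₄₁' = C₄₁` together with the agreement of the symmetric parts of `C₃₂'` and `C₃₂`. -/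
theorem stmt_9
    (W0 W1 W2 : Type*)
    [AddCommGroup W0] [Module ℝ W0]
    [AddCommGroup W1] [Module ℝ W1]
    [AddCommGroup W2] [Module ℝ W2]
    (d2 : W2 →ₗ[ℝ] W1) (d1 : W1 →ₗ[ℝ] W0)
    (hd : ∀ a : W2, d1 (d2 a) = 0)
    (ω ω' : (W2 × W1 × W1 × W0) →ₗ[ℝ] (W2 × W1 × W1 × W0) →ₗ[ℝ] ℝ)
    (halt : ∀ v, ω v v = 0)
    (halt' : ∀ v, ω' v v = 0)
    (hnorm : ∀ (x x' : W1) (m m' : W0),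
        ω (0, x, x, m) (0, x', x', m') = 0 ∧ ω (0, 0, x, m) (0, 0, x', m') = 0)
    (hnorm' : ∀ (x x' : W1) (m m' : W0),
        ω' (0, x, x, m) (0, x', x', m') = 0 ∧ ω' (0, 0, x, m) (0, 0, x', m') = 0)
    (hmult : ∀ (a b c : W2) (x y z : W1) (m : W0)
        (a' b' c' : W2) (x' y' z' : W1) (m' : W0),
      ω (a, x, y, m) (a', x', y', m')
      - ω (b, x, z, m) (b', x', z', m')
      + ω (c, y, z, m) (c', y', z', m')
      - ω (c - b + a, d2 a + y - x, d2 b + z - x, m - d1 x)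
          (c' - b' + a', d2 a' + y' - x', d2 b' + z' - x', m' - d1 x') = 0)
    (hmult' : ∀ (a b c : W2) (x y z : W1) (m : W0)
        (a' b' c' : W2) (x' y' z' : W1) (m' : W0),
      ω' (a, x, y, m) (a', x', y', m')
      - ω' (b, x, z, m) (b', x', z', m')
      + ω' (c, y, z, m) (c', y', z', m')
      - ω' (c - b + a, d2 a + y - x, d2 b + z - x, m - d1 x)
          (c' - b' + a', d2 a' + y' - x', d2 b' + z' - x', m' - d1 x') = 0) :
    -- (i) ↔ (ii)
    ((∃ α : (W1 × W0) →ₗ[ℝ] (W1 × W0) →ₗ[ℝ] ℝ,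
        (∀ v, α v v = 0)
        ∧ (∀ m m' : W0, α (0, m) (0, m') = 0)
        ∧ (∀ (m : W0) (a : W2), α (0, m) (d2 a, 0) = 0)
        ∧ (∀ x x' : W1, α (0, d1 x) (x', 0) + α (0, d1 x') (x, 0) = 0)
        ∧ (∀ u v : W2 × W1 × W1 × W0,
            ω' u v - ω u v =
              α (u.2.1, u.2.2.2) (v.2.1, v.2.2.2)
              - α (u.2.2.1, u.2.2.2) (v.2.2.1, v.2.2.2)
              + α (d2 u.1 + u.2.2.1 - u.2.1, u.2.2.2 - d1 u.2.1)
                  (d2 v.1 + v.2.2.1 - v.2.1, v.2.2.2 - d1 v.2.1)))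
    ↔ ((∀ (m : W0) (a : W2),
          ω' (0, 0, 0, m) (a, 0, 0, 0) = ω (0, 0, 0, m) (a, 0, 0, 0))
        ∧ (∀ x x' : W1,
          ω' (0, 0, x, 0) (0, x', 0, 0) + ω' (0, 0, x', 0) (0, x, 0, 0)
            = ω (0, 0, x, 0) (0, x', 0, 0) + ω (0, 0, x', 0) (0, x, 0, 0)))) :=
  stmt_9_general (IsSMulRegular.of_right_eq_zero_of_smul fun _ h ↦ by simpa using h)
    ⟨halt, hnorm, hmult⟩ ⟨halt', hnorm', hmult'⟩
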